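/- arXiv:1805.08965 — 3 statements merged into one kernel-verified Lean document; each statement's English description precedes it below -/
import Mathlib

section
/- Let G be a group, A a subgroup of G, and N a finite normal subgroup of G contained in A. If A is an RS-subgroup of G, then the image A/N of A in the quotient group G/N is an RS-subgroup of G/N. -/
/-- A torsion element `x` of a group `G` is an *RS-element* of `G` if for every positive
integer `j` coprime to the order of `x`, `x ^ j` is conjugate in `G` to `x` or to `x⁻¹`. -/
def IsRSElement {G : Type*} [Group G] (x : G) : Prop :=
  ∀ j : ℕ, 0 < j → Nat.Coprime j (orderOf x) → (IsConj (x ^ j) x ∨ IsConj (x ^ j) x⁻¹)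

/-- A subgroup `A` of `G` is an *RS-subgroup* of `G` if every torsion element of `A`
is an RS-element of `G`. -/
def IsRSSubgroup {G : Type*} [Group G] (A : Subgroup G) : Prop :=
  ∀ a ∈ A, IsOfFinOrder a → IsRSElement a

/-!
Conjugacy passes to images, so the point is to lift a power of `f a` to a power of `a` that the
RS-condition in `G` controls. If `f a` and the elements of `A ⊓ f.ker` have finite order, then so
does `a`. As `orderOf (f a)` divides `orderOf a`, reduction of units
`(ZMod (orderOf a))ˣ → (ZMod (orderOf (f a)))ˣ` is surjective, so an exponent `j` coprime to
`orderOf (f a)` may be replaced by one coprime to `orderOf a` without changing `f a ^ j`.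
-/

theorem exists_pos_coprime_modEq_of_dvd {d n j : ℕ} (hn : n ≠ 0) (hdn : d ∣ n)
    (hj : j.Coprime d) : ∃ k, 0 < k ∧ k.Coprime n ∧ k ≡ j [MOD d] := by
  have : NeZero n := ⟨hn⟩
  obtain ⟨u, hu⟩ := ZMod.unitsMap_surjective hdn (ZMod.unitOfCoprime j hj)
  have val_modEq : (u : ZMod n).val ≡ j [MOD d] := by
    rw [← ZMod.natCast_eq_natCast_iff, ZMod.natCast_val, ← ZMod.unitsMap_val hdn, hu,
      ZMod.coe_unitOfCoprime]
  have n_modEq : n ≡ 0 [MOD d] := Nat.modEq_zero_iff_dvd.2 hdn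
  -- Adding `n` makes the representative positive when `n = 1`.
  refine ⟨(u : ZMod n).val + n, by lia, ?_, val_modEq.add n_modEq⟩
  simpa using ZMod.val_coe_unit_coprime u

theorem isOfFinOrder_of_map {G H : Type*} [Group G] [Monoid H] {f : G →* H} {A : Subgroup G}
    (hker : IsMulTorsion (A ⊓ f.ker : Subgroup G)) {a : G} (ha : a ∈ A)
    (hfa : IsOfFinOrder (f a)) : IsOfFinOrder a := by
  obtain ⟨k, hk, hpow⟩ := isOfFinOrder_iff_pow_eq_one.1 hfa
  have pow_mem : a ^ k ∈ A ⊓ f.ker := ⟨A.pow_mem ha k, f.mem_ker.2 ((map_pow f a k).trans hpow)⟩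
  have pow_torsion : IsOfFinOrder (a ^ k) := Submonoid.isOfFinOrder_coe.2 (hker ⟨a ^ k, pow_mem⟩)
  exact pow_torsion.of_pow hk.ne'

theorem IsRSElement.map {G H : Type*} [Group G] [Group H] {x : G} (hx : IsRSElement x)
    (hfin : IsOfFinOrder x) (f : G →* H) : IsRSElement (f x) := by
  intro j _ hj
  obtain ⟨k, hk, hkx, hkj⟩ :=
    exists_pos_coprime_modEq_of_dvd hfin.orderOf_pos.ne' (orderOf_map_dvd f x) hj
  have pow_eq : f x ^ j = f (x ^ k) := by rw [map_pow, pow_eq_pow_iff_modEq.2 hkj]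
  rw [pow_eq, ← map_inv]
  exact (hx k hk hkx).imp f.map_isConj f.map_isConj

theorem rsSubgroup_quotient_general {G H : Type*} [Group G] [Group H] (f : G →* H)
    {A : Subgroup G} (hker : IsMulTorsion (A ⊓ f.ker : Subgroup G)) (hA : IsRSSubgroup A) :
    IsRSSubgroup (A.map f) := by
  rintro _ ⟨a, ha, rfl⟩ hfa
  have ha_fin : IsOfFinOrder a := isOfFinOrder_of_map hker ha hfa
  exact (hA a ha ha_fin).map ha_fin f

/-- If `A` is an RS-subgroup of `G` and `N` is a finite normal subgroup of `G` contained
in `A`, then the image of `A` in `G ⧸ N` is an RS-subgroup of `G ⧸ N`. -/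
theorem rsSubgroup_quotient {G : Type*} [Group G] (A N : Subgroup G) [N.Normal]
    [Finite N] (hNA : N ≤ A) (hA : IsRSSubgroup A) :
    IsRSSubgroup (A.map (QuotientGroup.mk' N)) := by
  have ker_inf : A ⊓ (QuotientGroup.mk' N).ker = N := by
    rw [QuotientGroup.ker_mk', inf_eq_right.2 hNA]
  exact rsSubgroup_quotient_general _ (by rw [ker_inf]; exact isOfFinOrder_of_finite) hA
end

section
/- If G is a cut-group and N is a finite normal subgroup of G, then the quotient group G/N is a cut-group. -/
/-- A group `G` is a *cut-group* if every central unit of the integral group ring `ℤ[G]`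
is trivial, i.e. of the form `±g` for some `g ∈ G`. -/
def IsCutGroup (G : Type*) [Group G] : Prop :=
  ∀ u : (MonoidAlgebra ℤ G)ˣ,
    (u : MonoidAlgebra ℤ G) ∈ Subring.center (MonoidAlgebra ℤ G) →
    ∃ g : G, (u : MonoidAlgebra ℤ G) = MonoidAlgebra.of ℤ G g ∨
      (u : MonoidAlgebra ℤ G) = -(MonoidAlgebra.of ℤ G g)

/-!
Let `f : G →* G ⧸ N` be the projection, `u` a central unit of `ℤ[G ⧸ N]` and `star` the involution
inverting group elements. If a power of `u * star u` lifts to a central unit of `ℤ[G]`, then that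
power is trivial because `G` is a cut-group. The coefficient of `x * star x` at `1` is the sum of
the squares of the coefficients of `x`. Hence a trivial `x * star x` is `1`, a power of `u * star u`
equal to `1` forces `u * star u = 1`, and `u` itself is trivial.

For the lift, the supports of `u` and `u⁻¹` generate a group `K` with finite conjugacy classes,
whose quotient by some finite normal subgroup is free abelian. Central idempotents of `ℤ[K]` are
trivial and its center is reduced, so `u` is homogeneous for the grading by this free abelian group,
and `u * star u` is supported in a finite subgroup. Reducing modulo `n = |N|` places it in a finite
monoid, so some power has the form `1 + y * n`. Replacing `n` by the sum of the elements of `N` and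
`y` by any preimage lifts this power to a central unit of `ℤ[G]`.
-/

namespace GroupRing

open MonoidAlgebra

section Involution

variable {R G : Type*} [CommSemiring R] [Group G]

/-- The `R`-linear involution of the group ring `R[G]` that inverts group elements. No star
operation on `R` is involved: coefficients are left unchanged. -/
noncomputable instance : StarRing R[G] where
  star x := mapDomain (·⁻¹) x
  star_involutive x := by
    induction x using induction_linear with
    | zero => simp only [mapDomain_zero]
    | add x y hx hy => simp only [mapDomain_add] at hx hy ⊢; rw [hx, hy]
    | single g r => simp only [mapDomain_single, inv_inv]
  star_add := mapDomain_add _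
  star_mul x y := by
    induction x using induction_linear with
    | zero => simp only [zero_mul, mul_zero, mapDomain_zero]
    | add x x' hx hx' => simp only [add_mul, mul_add, mapDomain_add, hx, hx']
    | single g r =>
      induction y using induction_linear with
      | zero => simp only [zero_mul, mul_zero, mapDomain_zero]
      | add y y' hy hy' => simp only [add_mul, mul_add, mapDomain_add, hy, hy']
      | single h s => simp only [single_mul_single, mapDomain_single, mul_inv_rev, mul_comm r]

theorem coeff_star (x : R[G]) (g : G) : (star x).coeff g = x.coeff g⁻¹ :=
  Finsupp.mapDomain_equiv_apply (f := Equiv.inv G) x.coeff g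

theorem coeff_mul_star_one (x : R[G]) :
    (x * star x).coeff 1 = ∑ g ∈ x.coeff.support, x.coeff g ^ 2 := by
  simp only [coeff_mul_apply_left, coeff_star, mul_one, inv_inv, sq, Finsupp.sum]

end Involution

theorem pow_mul_star_pow {S : Type*} [Monoid S] [StarMul S] (u : S) [IsStarNormal u] (k : ℕ) :
    u ^ k * star (u ^ k) = (u * star u) ^ k := by
  rw [star_pow, ← Commute.mul_pow (star_comm_self' u).symm]

section Positivity

variable {R G : Type*} [CommRing R] [LinearOrder R] [IsStrictOrderedRing R] [Group G]

theorem coeff_mul_star_one_nonneg (x : R[G]) : 0 ≤ (x * star x).coeff 1 :=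
  (coeff_mul_star_one x).symm ▸ Finset.sum_nonneg fun g _ ↦ sq_nonneg (x.coeff g)

theorem coeff_mul_star_one_eq_zero {x : R[G]} : (x * star x).coeff 1 = 0 ↔ x = 0 := by
  refine ⟨fun h ↦ ?_, fun h ↦ by simp [h]⟩
  rw [coeff_mul_star_one, Finset.sum_eq_zero_iff_of_nonneg fun g _ ↦ sq_nonneg _] at h
  ext g
  by_contra hg
  exact hg (pow_eq_zero_iff two_ne_zero |>.mp (h g (Finsupp.mem_support_iff.mpr hg)))

theorem mul_star_self_eq_zero {x : R[G]} : x * star x = 0 ↔ x = 0 :=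
  ⟨fun h ↦ coeff_mul_star_one_eq_zero.mp (by simp [h]), fun h ↦ by simp [h]⟩

theorem eq_zero_of_sum_mul_star_eq_zero {ι : Type*} {s : Finset ι} {x : ι → R[G]}
    (h : ∑ i ∈ s, x i * star (x i) = 0) {i : ι} (hi : i ∈ s) : x i = 0 := by
  have hsum : ∑ j ∈ s, (x j * star (x j)).coeff 1 = 0 := by
    simpa [coeff_sum] using congr_arg (fun y ↦ y.coeff 1) h
  exact coeff_mul_star_one_eq_zero.mp
    ((Finset.sum_eq_zero_iff_of_nonneg fun j _ ↦ coeff_mul_star_one_nonneg (x j)).mp hsum i hi)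

theorem mul_star_eq_one_of_pow_eq_one {u : R[G]} [IsStarNormal u] {k : ℕ} (hk : k ≠ 0)
    (h : (u * star u) ^ k = 1) : u * star u = 1 := by
  set w := u * star u
  have hw_star : star (w - 1) = w - 1 := by
    rw [star_sub, star_one, (IsSelfAdjoint.mul_star_self u).star_eq]
  have hsum : ∑ i ∈ Finset.range k, ((w - 1) * u ^ i) * star ((w - 1) * u ^ i) = 0 :=
    calc ∑ i ∈ Finset.range k, ((w - 1) * u ^ i) * star ((w - 1) * u ^ i)
      _ = ∑ i ∈ Finset.range k, (w - 1) * w ^ i * (w - 1) := by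
        refine Finset.sum_congr rfl fun i _ ↦ ?_
        rw [star_mul, hw_star, ← mul_assoc, mul_assoc (w - 1), pow_mul_star_pow]
      _ = (w ^ k - 1) * (w - 1) := by rw [← Finset.sum_mul, ← Finset.mul_sum, mul_geom_sum]
      _ = 0 := by rw [h, sub_self, zero_mul]
  simpa [sub_eq_zero] using
    eq_zero_of_sum_mul_star_eq_zero hsum (Finset.mem_range.mpr (Nat.pos_of_ne_zero hk))

theorem isReduced_center : IsReduced (Subring.center R[G]) := by
  refine (isReduced_iff_pow_one_lt 2 one_lt_two).mpr fun x hx ↦ Subtype.ext ?_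
  have hx : (x : R[G]) * x = 0 := by simpa [sq] using congr_arg Subtype.val hx
  have hcomm := Subring.mem_center_iff.mp x.2 (star (x : R[G]))
  refine mul_star_self_eq_zero.mp (mul_star_self_eq_zero.mp ?_)
  rw [star_mul, star_star, mul_assoc, ← mul_assoc (star _), hcomm, ← mul_assoc,
    ← mul_assoc, hx, zero_mul, zero_mul]

end Positivity

section Integral

variable {G : Type*} [Group G]

theorem eq_zero_or_one_of_isStarProjection {p : ℤ[G]} (hp : IsStarProjection p) :
    p = 0 ∨ p = 1 := by
  have key {q : ℤ[G]} (hq : IsStarProjection q) : q * star q = q := by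
    rw [hq.isSelfAdjoint.star_eq, hq.isIdempotentElem.eq]
  have hp0 := coeff_mul_star_one_nonneg p
  have hp1 := coeff_mul_star_one_nonneg (1 - p)
  rw [key hp] at hp0
  rw [key hp.one_sub, coeff_sub, Finsupp.sub_apply, one_def, coeff_single,
    Finsupp.single_eq_same] at hp1
  obtain h | h : p.coeff 1 = 0 ∨ (1 - p).coeff 1 = 0 := by
    rw [coeff_sub, Finsupp.sub_apply, one_def, coeff_single, Finsupp.single_eq_same]
    lia
  · exact .inl (coeff_mul_star_one_eq_zero.mp (by rwa [key hp]))
  · exact .inr (sub_eq_zero.mp (coeff_mul_star_one_eq_zero.mp (by rwa [key hp.one_sub]))).symm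

theorem eq_zero_or_one_of_isIdempotentElem_of_mem_center {e : ℤ[G]} (he : IsIdempotentElem e)
    (hc : e ∈ Subring.center ℤ[G]) : e = 0 ∨ e = 1 := by
  have hcomm : Commute (star e) e := Subring.mem_center_iff.mp hc _
  have hp : IsStarProjection (e * star e) :=
    ⟨he.mul_of_commute hcomm.symm he.star, .mul_star_self e⟩
  obtain h | h := eq_zero_or_one_of_isStarProjection hp
  · exact .inl (mul_star_self_eq_zero.mp h)
  · right
    calc e = e * (e * star e) := by rw [h, mul_one]
      _ = 1 := by rw [← mul_assoc, he.eq, h]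

end Integral

section TrivialUnits

/-- The trivial units `±g` of the group ring `R[G]`, as elements of the group ring. -/
def IsTrivialUnit {R G : Type*} [Ring R] [Group G] (x : R[G]) : Prop :=
  ∃ g : G, x = of R G g ∨ x = -of R G g

theorem IsTrivialUnit.mapDomainRingHom {R G H : Type*} [Ring R] [Group G] [Group H] {x : R[G]}
    (hx : IsTrivialUnit x) (f : G →* H) :
    IsTrivialUnit (MonoidAlgebra.mapDomainRingHom R f x) := by
  obtain ⟨g, rfl | rfl⟩ := hx
  · exact ⟨f g, .inl (by simp)⟩
  · exact ⟨f g, .inr (by rw [map_neg]; simp)⟩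

theorem IsTrivialUnit.mul_star_eq_one {R G : Type*} [CommRing R] [LinearOrder R]
    [IsStrictOrderedRing R] [Group G] {x : R[G]} (hx : IsTrivialUnit (x * star x)) :
    x * star x = 1 := by
  have hpos := coeff_mul_star_one_nonneg x
  have hne : (x * star x).coeff 1 ≠ 0 := fun h ↦ by
    obtain rfl := coeff_mul_star_one_eq_zero.mp h
    obtain ⟨g, hg | hg⟩ := hx <;> simp [eq_comm] at hg
  obtain ⟨g, hg | hg⟩ := hx
  all_goals
    rw [hg] at hpos hne ⊢
    obtain rfl : g = 1 := by
      by_contra h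
      simp [h] at hne
  · rw [map_one]
  · exact absurd hpos (by simp)

theorem isTrivialUnit_of_mul_star_eq_one {G : Type*} [Group G] {u : ℤ[G]}
    (hu : u * star u = 1) : IsTrivialUnit u := by
  have hsum : ∑ g ∈ u.coeff.support, u.coeff g ^ 2 = 1 := by
    rw [← coeff_mul_star_one, hu, one_def, coeff_single, Finsupp.single_eq_same]
  have hcard : u.coeff.support.card = 1 := by
    have hle : (u.coeff.support.card : ℤ) ≤ 1 := by
      rw [← hsum, Finset.cast_card]
      exact Finset.sum_le_sum fun g hg ↦ sq_pos_of_ne_zero (Finsupp.mem_support_iff.mp hg)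
    have hne : u.coeff.support.card ≠ 0 := fun h ↦ by
      simp [Finset.card_eq_zero.mp h] at hsum
    lia
  obtain ⟨g, hg⟩ := Finset.card_eq_one.mp hcard
  rw [hg, Finset.sum_singleton] at hsum
  have hu : u = single g (u.coeff g) := ext (Finsupp.support_subset_singleton.mp hg.subset)
  refine ⟨g, (sq_eq_one_iff.mp hsum).imp (fun h ↦ ?_) fun h ↦ ?_⟩
  · rw [hu, h, of_apply]
  · rw [hu, h, of_apply, single_neg]

end TrivialUnits

section UnitsOverReducedRings

theorem coeff_eq_zero_or_of_mul_eq_one {R A : Type*} [Semiring R] [NoZeroDivisors R] [Monoid A]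
    [TwoUniqueProds A] {f g : R[A]} (hfg : f * g = 1) {a b : A} (hab : a ≠ b) :
    f.coeff a = 0 ∨ f.coeff b = 0 := by
  by_contra! hne
  have : Nontrivial R := ⟨_, _, hne.1⟩
  have hf : 1 < f.coeff.support.card :=
    Finset.one_lt_card.mpr ⟨a, by simpa using hne.1, b, by simpa using hne.2, hab⟩
  have hg : 0 < g.coeff.support.card := Finset.card_pos.mpr <| by
    rw [Finsupp.support_nonempty_iff, ne_eq, coeff_eq_zero]
    rintro rfl
    simp at hfg
  have hcoeff {p : A × A} (hp : p ∈ f.coeff.support ×ˢ g.coeff.support)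
      (hu : UniqueMul f.coeff.support g.coeff.support p.1 p.2) : p.1 * p.2 = 1 := by
    by_contra h
    have hmul := coeff_mul_mul_of_uniqueMul hu
    rw [hfg, one_def, coeff_single, Finsupp.single_eq_of_ne h, eq_comm, mul_eq_zero] at hmul
    simpa using hmul.elim (Finsupp.mem_support_iff.mp (Finset.mem_product.mp hp).1)
      (Finsupp.mem_support_iff.mp (Finset.mem_product.mp hp).2)
  obtain ⟨p, hp, q, hq, hpq, hup, huq⟩ := TwoUniqueProds.uniqueMul_of_one_lt_card
    (hf.trans_le (Nat.le_mul_of_pos_right _ hg))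
  have hq' := Finset.mem_product.mp hq
  obtain ⟨h₁, h₂⟩ := hup hq'.1 hq'.2 ((hcoeff hq huq).trans (hcoeff hp hup).symm)
  exact hpq (Prod.ext h₁.symm h₂.symm)

theorem coeff_mul_coeff_eq_zero_of_mul_eq_one {R A : Type*} [CommRing R] [IsReduced R] [Monoid A]
    [TwoUniqueProds A] {f g : R[A]} (hfg : f * g = 1) {a b : A} (hab : a ≠ b) :
    f.coeff a * f.coeff b = 0 := by
  refine IsNilpotent.eq_zero (nilpotent_iff_mem_prime.mpr fun P hP ↦ ?_)
  have hmap : mapRingHom A (Ideal.Quotient.mk P) f * mapRingHom A (Ideal.Quotient.mk P) g = 1 := by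
    rw [← map_mul, hfg, map_one]
  simpa [← Ideal.Quotient.eq_zero_iff_mem] using coeff_eq_zero_or_of_mul_eq_one hmap hab

theorem exists_eq_single_of_mul_eq_one {R A : Type*} [CommRing R] [IsReduced R] [Nontrivial R]
    (hR : ∀ e : R, IsIdempotentElem e → e = 0 ∨ e = 1) [Group A] [TwoUniqueProds A] {f g : R[A]}
    (hfg : f * g = 1) : ∃ (a : A) (r : R), f = single a r := by
  have hsum : ∑ a ∈ f.coeff.support, f.coeff a * g.coeff a⁻¹ = 1 := by
    simpa [hfg, one_def, Finsupp.sum] using (coeff_mul_apply_left f g 1).symm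
  have hidem : CompleteOrthogonalIdempotents
      fun a : f.coeff.support ↦ f.coeff a * g.coeff (a : A)⁻¹ := by
    refine CompleteOrthogonalIdempotents.iff_ortho_complete.mpr ⟨fun a b hab ↦ ?_, ?_⟩
    · beta_reduce
      rw [mul_mul_mul_comm,
        coeff_mul_coeff_eq_zero_of_mul_eq_one hfg (Subtype.coe_ne_coe.mpr hab),
        zero_mul]
    · rw [Finset.sum_coe_sort f.coeff.support fun a ↦ f.coeff a * g.coeff a⁻¹, hsum]
  obtain ⟨a, ha, hne⟩ := Finset.exists_ne_zero_of_sum_ne_zero (hsum ▸ one_ne_zero)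
  have hone := (hR _ (hidem.idem ⟨a, ha⟩)).resolve_left hne
  refine ⟨a, f.coeff a, ext (Finsupp.support_subset_singleton.mp fun b hb ↦ ?_)⟩
  by_contra hba
  refine Finsupp.mem_support_iff.mp hb ?_
  calc f.coeff b = f.coeff b * (f.coeff a * g.coeff a⁻¹) := by rw [hone, mul_one]
    _ = 0 := by
        rw [← mul_assoc, coeff_mul_coeff_eq_zero_of_mul_eq_one hfg (by simpa using hba), zero_mul]

end UnitsOverReducedRings

section Coaction

variable {R K A : Type*}

/-- The `R[A]`-comodule structure of `R[K]` given by a homomorphism `ψ : K →* A`, as a ring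
homomorphism: it sends `k` to `k ⊗ ψ k`, where `R[K] ⊗ R[A]` is realized as `R[K][A]`. It encodes
the grading of `R[K]` by `A` in which `k` has degree `ψ k`. -/
noncomputable def coaction (R : Type*) [Semiring R] [Monoid K] [Monoid A] (ψ : K →* A) :
    R[K] →+* R[K][A] :=
  (curryRingEquiv (R := R) (M := A) (N := K)).toRingHom.comp
    (mapDomainRingHom R (ψ.prod (.id K)))

theorem coaction_single [Semiring R] [Monoid K] [Monoid A] (ψ : K →* A) (k : K) (r : R) :
    coaction R ψ (single k r) = single (ψ k) (single k r) := by
  simp [coaction]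

theorem coeff_coeff_coaction [Semiring R] [Monoid K] [Monoid A] (ψ : K →* A) (x : R[K]) (k : K) :
    ((coaction R ψ x).coeff (ψ k)).coeff k = x.coeff k :=
  Finsupp.mapDomain_apply (f := ψ.prod (.id K)) (fun _ _ h ↦ congr_arg Prod.snd h) x.coeff k

variable [Group K] [CommGroup A]

theorem coeff_coaction_mem_center [Ring R] (ψ : K →* A) {x : R[K]} (hx : x ∈ Subring.center R[K])
    (a : A) : (coaction R ψ x).coeff a ∈ Subring.center R[K] := by
  refine Subring.mem_center_iff.mpr fun y ↦ ?_
  induction y using induction_linear with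
  | zero => rw [zero_mul, mul_zero]
  | add y z hy hz => rw [add_mul, mul_add, hy, hz]
  | single k r =>
    have h := congr_arg (coaction R ψ) (Subring.mem_center_iff.mp hx (single k r))
    rw [map_mul, map_mul, coaction_single] at h
    rw [← coeff_single_mul_mul _ (single k r) (ψ k) a, h, mul_comm (ψ k), coeff_mul_single_mul]

theorem exists_mapRingHom_subtype_eq {S : Type*} [Ring S] {T : Subring S} {x : S[A]}
    (hx : ∀ a, x.coeff a ∈ T) : ∃ y : T[A], mapRingHom A T.subtype y = x := by
  have h : x ∈ Set.range (map (M := A) T.subtype.toAddMonoidHom) := by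
    rw [range_map]
    exact fun a ↦ ⟨⟨_, hx a⟩, rfl⟩
  exact h

theorem exists_forall_mem_support_map_eq [TwoUniqueProds A] (ψ : K →* A) {u : ℤ[K]ˣ}
    (hu : (u : ℤ[K]) ∈ Subring.center ℤ[K]) :
    ∃ a, ∀ k ∈ (u : ℤ[K]).coeff.support, ψ k = a := by
  have hu' : (↑u⁻¹ : ℤ[K]) ∈ Subring.center ℤ[K] := Set.units_inv_mem_center hu
  obtain ⟨y, hy⟩ := exists_mapRingHom_subtype_eq (coeff_coaction_mem_center ψ hu)
  obtain ⟨y', hy'⟩ := exists_mapRingHom_subtype_eq (coeff_coaction_mem_center ψ hu')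
  have hyy' : y * y' = 1 := by
    have hinj : Function.Injective (mapRingHom A (Subring.center ℤ[K]).subtype) :=
      map_injective _ (Subring.subtype_injective _)
    refine hinj ?_
    rw [map_mul, hy, hy', ← map_mul, Units.mul_inv, map_one, map_one]
  have : IsReduced (Subring.center ℤ[K]) := isReduced_center
  obtain ⟨a, c, rfl⟩ := exists_eq_single_of_mul_eq_one
    (fun e he ↦ (eq_zero_or_one_of_isIdempotentElem_of_mem_center
      (he.map (Subring.center ℤ[K]).subtype) e.2).imp Subtype.ext Subtype.ext) hyy'
  refine ⟨a, fun k hk ↦ ?_⟩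
  by_contra hka
  rw [mapRingHom_single] at hy
  refine Finsupp.mem_support_iff.mp hk ?_
  rw [← coeff_coeff_coaction ψ, ← hy, coeff_single, Finsupp.single_eq_of_ne hka, coeff_zero,
    Finsupp.zero_apply]

end Coaction

section FiniteByFree

open scoped IsMulCommutative

theorem finiteIndex_center_of_closure_eq_top {K : Type*} [Group K] {X : Set K} (hfin : X.Finite)
    (hconj : ∀ k, ∀ x ∈ X, k * x * k⁻¹ ∈ X) (hX : Subgroup.closure X = ⊤) :
    (Subgroup.center K).FiniteIndex := by
  have : Finite X := hfin
  rw [Subgroup.center_eq_infi' hX]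
  refine Subgroup.finiteIndex_iInf fun x ↦ ⟨?_⟩
  have horbit : (MulAction.orbit (ConjAct K) (x : K)).Finite := hfin.subset <| by
    rintro _ ⟨k, rfl⟩
    exact hconj (ConjAct.ofConjAct k) x x.2
  have hindex : (Subgroup.centralizer {(x : K)}).index =
      (MulAction.stabilizer (ConjAct K) (x : K)).index :=
    (congr_arg _ (Subgroup.centralizer_eq_comap_stabilizer (x : K))).trans
      (Subgroup.index_comap_of_surjective _ ConjAct.toConjAct.surjective)
  rw [hindex, MulAction.index_stabilizer]
  exact ((Set.ncard_pos horbit).mpr (MulAction.nonempty_orbit _)).ne'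

theorem exists_finite_ker_of_commGroup (A : Type*) [CommGroup A] [Group.FG A] :
    ∃ (ι : Type) (φ : A →* (ι → Multiplicative ℤ)), Finite φ.ker := by
  obtain ⟨κ, ι, _, _, p, hp, n, ⟨e⟩⟩ := CommGroup.equiv_free_prod_prod_multiplicative_zmod A
  have (k : κ) : NeZero (p k ^ n k) := ⟨pow_ne_zero _ (hp k).ne_zero⟩
  have (k : κ) : Finite (Multiplicative (ZMod (p k ^ n k))) :=
    inferInstanceAs (Finite (ZMod (p k ^ n k)))
  refine ⟨ι, (MonoidHom.fst _ _).comp e.toMonoidHom, ?_⟩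
  refine Finite.of_injective (fun x ↦ (e x).2) fun x y hxy ↦ Subtype.ext (e.injective ?_)
  exact Prod.ext ((MonoidHom.mem_ker.mp x.2).trans (MonoidHom.mem_ker.mp y.2).symm) hxy

theorem exists_finite_ker_of_finiteIndex_center (K : Type*) [Group K] [Group.FG K]
    [(Subgroup.center K).FiniteIndex] :
    ∃ (ι : Type) (ψ : K →* (ι → Multiplicative ℤ)), Finite ψ.ker := by
  obtain ⟨ι, φ, hφ⟩ := exists_finite_ker_of_commGroup (Subgroup.center K)
  refine ⟨ι, φ.comp (MonoidHom.transferCenterPow K), ?_⟩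
  set ψ := φ.comp (MonoidHom.transferCenterPow K)
  have hcenter (z : Subgroup.center K) (hz : (z : K) ∈ ψ.ker) : z ∈ φ.ker := by
    have hpow : MonoidHom.transferCenterPow K z = z ^ (Subgroup.center K).index :=
      Subtype.ext (MonoidHom.transferCenterPow_apply (z : K))
    rw [MonoidHom.mem_ker, MonoidHom.comp_apply, hpow, map_pow] at hz
    exact (pow_eq_one_iff_left Subgroup.FiniteIndex.index_ne_zero).mp hz
  refine (Subgroup.finite_iff_finite_and_finiteIndex ((Subgroup.center K).subgroupOf ψ.ker)).mpr
    ⟨?_, inferInstance⟩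
  refine Finite.of_injective (β := φ.ker) (fun x ↦ ⟨⟨x, x.2⟩, hcenter ⟨x, x.2⟩ x.1.2⟩) ?_
  intro x y hxy
  exact Subtype.ext (Subtype.ext (congr_arg (fun z : φ.ker ↦ ((z : Subgroup.center K) : K)) hxy))

end FiniteByFree

section CentralUnits

variable {R H : Type*} [Group H]

theorem coeff_conj_of_mem_center [Ring R] {x : R[H]} (hx : x ∈ Subring.center R[H]) (h g : H) :
    x.coeff (h * g * h⁻¹) = x.coeff g := by
  have hcomm := congr_arg (fun y ↦ y.coeff (h * g)) (Subring.mem_center_iff.mp hx (single h 1))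
  simpa [coeff_single_mul_apply, coeff_mul_single_apply] using hcomm.symm

theorem exists_units_map_mapDomainRingHom_eq [Semiring R] {K : Type*} [Group K] {f : K →* H}
    (hf : Function.Injective f) {u : R[H]ˣ}
    (hu : ((u : R[H]).coeff.support : Set H) ⊆ Set.range f)
    (hu' : ((↑u⁻¹ : R[H]).coeff.support : Set H) ⊆ Set.range f) :
    ∃ v : R[K]ˣ, Units.map (mapDomainRingHom R f) v = u := by
  have hinj : Function.Injective (mapDomainRingHom R f) := mapDomain_injective hf
  have hv : mapDomainRingHom R f (comapDomain f hf u) = u := mapDomain_comapDomain hu hf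
  have hv' : mapDomainRingHom R f (comapDomain f hf ↑u⁻¹) = ↑u⁻¹ := mapDomain_comapDomain hu' hf
  refine ⟨⟨comapDomain f hf u, comapDomain f hf ↑u⁻¹, hinj ?_, hinj ?_⟩, Units.ext hv⟩
  · rw [map_mul, hv, hv', Units.mul_inv, map_one]
  · rw [map_mul, hv, hv', Units.inv_mul, map_one]

theorem mem_center_of_map_mem_center {S T : Type*} [Ring S] [Ring T] {f : S →+* T}
    (hf : Function.Injective f) {x : S} (hx : f x ∈ Subring.center T) : x ∈ Subring.center S :=
  Subring.mem_center_iff.mpr fun y ↦ hf <| by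
    rw [map_mul, map_mul, Subring.mem_center_iff.mp hx]

theorem exists_finite_subgroup_of_mem_center_of_finiteIndex {K : Type*} [Group K] [Group.FG K]
    [(Subgroup.center K).FiniteIndex] {u : ℤ[K]ˣ} (hu : (u : ℤ[K]) ∈ Subring.center ℤ[K]) :
    ∃ T : Subgroup K, Finite T ∧ ∀ x ∈ (u : ℤ[K]).coeff.support,
      ∀ y ∈ (u : ℤ[K]).coeff.support, x * y⁻¹ ∈ T := by
  obtain ⟨ι, ψ, hψ⟩ := exists_finite_ker_of_finiteIndex_center K
  obtain ⟨a, ha⟩ := exists_forall_mem_support_map_eq ψ hu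
  refine ⟨ψ.ker, hψ, fun x hx y hy ↦ ?_⟩
  rw [MonoidHom.mem_ker, map_mul, map_inv, ha x hx, ha y hy, mul_inv_cancel]

theorem exists_finite_subgroup_of_mem_center {u : ℤ[H]ˣ} (hu : (u : ℤ[H]) ∈ Subring.center ℤ[H]) :
    ∃ T : Subgroup H, Finite T ∧ ∀ x ∈ (u : ℤ[H]).coeff.support,
      ∀ y ∈ (u : ℤ[H]).coeff.support, x * y⁻¹ ∈ T := by
  have hu' : (↑u⁻¹ : ℤ[H]) ∈ Subring.center ℤ[H] := Set.units_inv_mem_center hu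
  set X : Set H := (u : ℤ[H]).coeff.support ∪ (↑u⁻¹ : ℤ[H]).coeff.support
  have hX : X.Finite := (Finset.finite_toSet _).union (Finset.finite_toSet _)
  have hconj (h x : H) (hx : x ∈ X) : h * x * h⁻¹ ∈ X := by
    simpa [X, coeff_conj_of_mem_center hu, coeff_conj_of_mem_center hu'] using hx
  set K := Subgroup.closure X
  have hXK : X ⊆ Set.range K.subtype := fun x hx ↦ ⟨⟨x, Subgroup.subset_closure hx⟩, rfl⟩
  have : Finite X := hX
  have : (Subgroup.center K).FiniteIndex := finiteIndex_center_of_closure_eq_top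
    (hX.preimage Subtype.val_injective.injOn) (fun k x hx ↦ hconj k x hx)
    Subgroup.closure_closure_coe_preimage
  obtain ⟨v, hv⟩ := exists_units_map_mapDomainRingHom_eq (R := ℤ) K.subtype_injective
    (Set.subset_union_left.trans hXK) (Set.subset_union_right.trans hXK)
  have hv : mapDomainRingHom ℤ K.subtype v = u := congr_arg Units.val hv
  obtain ⟨T, hT, hvT⟩ := exists_finite_subgroup_of_mem_center_of_finiteIndex (u := v) <|
    mem_center_of_map_mem_center (mapDomain_injective K.subtype_injective) (hv.symm ▸ hu)
  have hsupp {x : H} (hx : x ∈ (u : ℤ[H]).coeff.support) :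
      ∃ x' ∈ (v : ℤ[K]).coeff.support, K.subtype x' = x := by
    classical
    rw [← hv] at hx
    exact Finset.mem_image.mp (Finsupp.mapDomain_support hx)
  refine ⟨T.map K.subtype, (T : Set K).toFinite.image K.subtype, fun x hx y hy ↦ ?_⟩
  obtain ⟨x', hx', rfl⟩ := hsupp hx
  obtain ⟨y', hy', rfl⟩ := hsupp hy
  exact ⟨x' * y'⁻¹, hvT x' hx' y' hy', by simp⟩

theorem exists_finite_subgroup_support_mul_star_subset {u : ℤ[H]ˣ}
    (hu : (u : ℤ[H]) ∈ Subring.center ℤ[H]) :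
    ∃ T : Subgroup H, Finite T ∧ ((u * star (u : ℤ[H])).coeff.support : Set H) ⊆ T := by
  classical
  obtain ⟨T, hT, huT⟩ := exists_finite_subgroup_of_mem_center hu
  refine ⟨T, hT, fun h hh ↦ ?_⟩
  obtain ⟨x, hx, y, hy, rfl⟩ := Finset.mem_mul.mp (support_coeff_mul_subset _ _ hh)
  have hy : y⁻¹ ∈ (u : ℤ[H]).coeff.support := by
    simpa only [Finsupp.mem_support_iff, coeff_star] using hy
  simpa using huT x hx y⁻¹ hy

end CentralUnits

section FiniteOrder

variable {G : Type*} [Group G]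

theorem isOfFinOrder_of_support_subset {R : Type*} [Semiring R] [Finite R] {T : Subgroup G}
    [Finite T] {u : R[G]ˣ} (hu : ((u : R[G]).coeff.support : Set G) ⊆ T) : IsOfFinOrder u := by
  have : Finite R[T] := .of_injective (fun x : R[T] ↦ (x.coeff : T → R))
    (DFunLike.coe_injective.comp coeff_injective)
  obtain ⟨x, hx⟩ : (u : R[G]) ∈ Set.range (mapDomainRingHom R T.subtype) :=
    ⟨comapDomain T.subtype T.subtype_injective u,
      mapDomain_comapDomain (hu.trans Subtype.range_coe.ge) _⟩
  have hfin : (Submonoid.powers (u : R[G]) : Set R[G]).Finite :=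
    (Set.finite_range (mapDomainRingHom R T.subtype)).subset <| by
      rintro _ ⟨n, rfl⟩
      exact ⟨x ^ n, by rw [map_pow, hx]⟩
  refine finite_powers.mp ((hfin.preimage Units.val_injective.injOn).subset ?_)
  rintro _ ⟨n, rfl⟩
  exact ⟨n, by simp⟩

theorem exists_eq_mul_natCast_of_mapRingHom_eq_zero {n : ℕ} {x : ℤ[G]}
    (hx : mapRingHom G (Int.castRingHom (ZMod n)) x = 0) : ∃ y : ℤ[G], x = y * n := by
  have hdvd (g : G) : (n : ℤ) ∣ x.coeff g := by
    rw [← ZMod.intCast_zmod_eq_zero_iff_dvd]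
    simpa using congr_arg (fun y ↦ y.coeff g) hx
  refine ⟨ofCoeff (x.coeff.mapRange (· / (n : ℤ)) (Int.zero_ediv _)), ext (Finsupp.ext fun g ↦ ?_)⟩
  rw [natCast_def, coeff_mul_single_one]
  exact (Int.ediv_mul_cancel (hdvd g)).symm

theorem exists_pow_eq_one_add_mul_natCast {n : ℕ} (hn : n ≠ 0) {T : Subgroup G} [Finite T]
    {u : ℤ[G]ˣ} (hu : ((u : ℤ[G]).coeff.support : Set G) ⊆ T) :
    ∃ k ≠ 0, ∃ y : ℤ[G], (u : ℤ[G]) ^ k = 1 + y * n := by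
  have : NeZero n := ⟨hn⟩
  let reduce := mapRingHom G (Int.castRingHom (ZMod n))
  have hord : IsOfFinOrder (Units.map (reduce : ℤ[G] →* (ZMod n)[G]) u) := by
    refine isOfFinOrder_of_support_subset (T := T) (hu.trans' fun g hg ↦ ?_)
    exact Finsupp.support_mapRange (hf := map_zero _) hg
  obtain ⟨k, hk, h⟩ := isOfFinOrder_iff_pow_eq_one.mp hord
  have hzero : reduce ((u : ℤ[G]) ^ k - 1) = 0 := by
    rw [map_sub, map_one, map_pow, sub_eq_zero]
    exact congr_arg Units.val h
  obtain ⟨y, hy⟩ := exists_eq_mul_natCast_of_mapRingHom_eq_zero hzero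
  exact ⟨k, hk.ne', y, sub_eq_iff_eq_add'.mp hy⟩

end FiniteOrder

section KerSum

variable {R G H : Type*} [Semiring R] [Group G] [Group H]

/-- The sum in `R[G]` of the elements of the finite kernel of `f : G →* H`. The ideal it generates
is a copy of the group ring of the image of `f`, with multiplication scaled by the order of the
kernel. -/
noncomputable def kerSum (R : Type*) [Semiring R] (f : G →* H) [Finite f.ker] : R[G] :=
  ∑ k ∈ (f.ker : Set G).toFinite.toFinset, single k 1

variable (f : G →* H) [Finite f.ker]

theorem mapDomainRingHom_kerSum : mapDomainRingHom R f (kerSum R f) = Nat.card f.ker := by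
  have hker {k : G} (hk : k ∈ (f.ker : Set G).toFinite.toFinset) :
      mapDomainRingHom R f (single k 1) = 1 := by
    have hfk : f k = 1 := by simpa using hk
    simp [hfk, one_def]
  rw [kerSum, map_sum, Finset.sum_congr rfl fun k hk ↦ hker hk, Finset.sum_const, nsmul_one,
    ← Set.ncard_eq_toFinset_card (f.ker : Set G) _, ← Nat.card_coe_set_eq]
  rfl

theorem coeff_kerSum [DecidableEq H] (g : G) :
    (kerSum R f).coeff g = if f g = 1 then 1 else 0 := by
  classical
  simp [kerSum, coeff_sum, Finsupp.single_apply]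

theorem coeff_mul_kerSum (x : R[G]) (g : G) :
    (x * kerSum R f).coeff g = (mapDomainRingHom R f x).coeff (f g) := by
  classical
  induction x using induction_linear with
  | zero => simp
  | add x y hx hy => simp only [add_mul, map_add, coeff_add, Finsupp.add_apply, hx, hy]
  | single a r =>
    simp [coeff_single_mul_apply, coeff_kerSum, Finsupp.single_apply, inv_mul_eq_one]

variable {f}

theorem mul_kerSum_congr {x y : R[G]} (h : mapDomainRingHom R f x = mapDomainRingHom R f y) :
    x * kerSum R f = y * kerSum R f := by
  ext g
  rw [coeff_mul_kerSum, coeff_mul_kerSum, h]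

theorem kerSum_mul_kerSum : kerSum R f * kerSum R f = Nat.card f.ker * kerSum R f :=
  mul_kerSum_congr (by rw [mapDomainRingHom_kerSum, map_natCast])

theorem commute_kerSum (x : R[G]) : Commute x (kerSum R f) := by
  classical
  induction x using induction_linear with
  | zero => exact .zero_left _
  | add x y hx hy => exact hx.add_left hy
  | single a r =>
    ext g
    have hg : f (a⁻¹ * g) = 1 ↔ f (g * a⁻¹) = 1 := by rw [map_mul, map_mul, mul_eq_one_comm]
    simp only [coeff_single_mul_apply, coeff_mul_single_apply, coeff_kerSum, hg, mul_ite, ite_mul,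
      mul_one, one_mul, mul_zero, zero_mul]

end KerSum

section Lifting

variable {R G H : Type*} [Ring R] [Group G] [Group H] {f : G →* H} [Finite f.ker]

theorem mul_kerSum_mem_center {x : R[G]} (hx : mapDomainRingHom R f x ∈ Subring.center R[H]) :
    x * kerSum R f ∈ Subring.center R[G] := by
  refine Subring.mem_center_iff.mpr fun y ↦ ?_
  rw [mul_assoc, ← (commute_kerSum y).eq, ← mul_assoc, ← mul_assoc]
  exact mul_kerSum_congr (by rw [map_mul, map_mul, Subring.mem_center_iff.mp hx])

theorem one_add_mul_kerSum_mul (x y : R[G]) :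
    (1 + x * kerSum R f) * (1 + y * kerSum R f) =
      1 + (x + y + x * y * Nat.card f.ker) * kerSum R f := by
  have hxy : x * kerSum R f * (y * kerSum R f) = x * y * Nat.card f.ker * kerSum R f := by
    rw [(commute_kerSum y).eq, mul_assoc x, ← mul_assoc (kerSum R f), kerSum_mul_kerSum,
      mul_assoc _ _ y, ← (commute_kerSum y).eq]
    simp only [mul_assoc, (Nat.cast_commute _ y).left_comm]
  rw [mul_add, add_mul, add_mul, hxy]
  noncomm_ring

theorem exists_units_mem_center_map_eq (hf : Function.Surjective f) {w : R[H]ˣ} {y : R[H]}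
    (hy : y ∈ Subring.center R[H]) (hw : (w : R[H]) = 1 + y * Nat.card f.ker) :
    ∃ v : R[G]ˣ, (v : R[G]) ∈ Subring.center R[G] ∧ mapDomainRingHom R f v = w := by
  have hmap : Function.Surjective (mapDomainRingHom R f) := fun y ↦
    (Finsupp.mapDomain_surjective hf y.coeff).imp' ofCoeff fun x hx ↦ ext hx
  obtain ⟨x, rfl⟩ := hmap y
  obtain ⟨x', hx'⟩ := hmap (-(↑w⁻¹ * mapDomainRingHom R f x))
  have hcenter : 1 + x * kerSum R f ∈ Subring.center R[G] :=
    add_mem (one_mem _) (mul_kerSum_mem_center hy)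
  have hzero : mapDomainRingHom R f (x + x' + x * x' * Nat.card f.ker) = mapDomainRingHom R f 0 :=
    calc mapDomainRingHom R f (x + x' + x * x' * Nat.card f.ker)
      _ = mapDomainRingHom R f x + (1 + mapDomainRingHom R f x * Nat.card f.ker) *
            mapDomainRingHom R f x' := by
        simp only [map_add, map_mul, map_natCast, add_mul, one_mul, mul_assoc, add_assoc,
          (Nat.cast_commute _ (mapDomainRingHom R f x')).eq]
      _ = mapDomainRingHom R f 0 := by
        rw [← hw, hx', mul_neg, Units.mul_inv_cancel_left, add_neg_cancel, map_zero]
  have hinv : (1 + x * kerSum R f) * (1 + x' * kerSum R f) = 1 := by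
    rw [one_add_mul_kerSum_mul, mul_kerSum_congr hzero, zero_mul, add_zero]
  refine ⟨⟨_, _, hinv, (Subring.mem_center_iff.mp hcenter _).trans hinv⟩, hcenter, ?_⟩
  rw [hw, map_add, map_one, map_mul, mapDomainRingHom_kerSum]

theorem mem_center_of_mul_natCast_mem_center {S : Type*} [Ring S] [IsAddTorsionFree S] {n : ℕ}
    (hn : n ≠ 0) {y : S} (hy : y * n ∈ Subring.center S) : y ∈ Subring.center S := by
  refine Subring.mem_center_iff.mpr fun z ↦ nsmul_right_injective hn ?_
  simpa only [nsmul_eq_mul', mul_assoc, (Nat.cast_commute n z).eq] using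
    Subring.mem_center_iff.mp hy z

theorem exists_units_mem_center_map_eq_mul_star_pow {G H : Type*} [Group G] [Group H] {f : G →* H}
    [Finite f.ker] (hf : Function.Surjective f) {u : ℤ[H]ˣ}
    (hu : (u : ℤ[H]) ∈ Subring.center ℤ[H]) :
    ∃ k ≠ 0, ∃ v : ℤ[G]ˣ, (v : ℤ[G]) ∈ Subring.center ℤ[G] ∧
      mapDomainRingHom ℤ f v = (u * star (u : ℤ[H])) ^ k := by
  obtain ⟨T, _, hT⟩ := exists_finite_subgroup_support_mul_star_subset hu
  obtain ⟨k, hk, y, hy⟩ :=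
    exists_pow_eq_one_add_mul_natCast (Nat.card_pos (α := f.ker)).ne' (u := u * star u) hT
  have hw : (↑(u * star u) : ℤ[H]) ∈ Subring.center ℤ[H] := mul_mem hu (Set.star_mem_center hu)
  have hy_mul : y * Nat.card f.ker ∈ Subring.center ℤ[H] := by
    rw [← add_sub_cancel_left 1 (y * _), ← hy]
    exact sub_mem (pow_mem hw k) (one_mem _)
  have : IsAddTorsionFree ℤ[H] := Module.isTorsionFree_int_iff_isAddTorsionFree.mp inferInstance
  obtain ⟨v, hv, hvu⟩ := exists_units_mem_center_map_eq hf (w := (u * star u) ^ k)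
    (mem_center_of_mul_natCast_mem_center Nat.card_pos.ne' hy_mul) hy
  exact ⟨k, hk, v, hv, hvu⟩

end Lifting

end GroupRing

/-- If `G` is a cut-group and `N` is a finite normal subgroup of `G`, then `G ⧸ N`
is a cut-group. -/
theorem isCutGroup_quotient {G : Type*} [Group G] (N : Subgroup G) [N.Normal] [Finite N]
    (hG : IsCutGroup G) : IsCutGroup (G ⧸ N) := by
  intro u hu
  let f := QuotientGroup.mk' N
  have : Finite f.ker := by rwa [QuotientGroup.ker_mk']
  obtain ⟨k, hk, v, hv, hvu⟩ :=
    GroupRing.exists_units_mem_center_map_eq_mul_star_pow (QuotientGroup.mk'_surjective N) hu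
  have : IsStarNormal (u : MonoidAlgebra ℤ (G ⧸ N)) := ⟨Subring.mem_center_iff.mp hu _⟩
  have hpow := GroupRing.pow_mul_star_pow (u : MonoidAlgebra ℤ (G ⧸ N)) k
  have htriv : GroupRing.IsTrivialUnit ((u * star u : MonoidAlgebra ℤ (G ⧸ N)) ^ k) :=
    hvu ▸ GroupRing.IsTrivialUnit.mapDomainRingHom (hG v hv) f
  have hone : (u * star u : MonoidAlgebra ℤ (G ⧸ N)) ^ k = 1 :=
    hpow.symm.trans (hpow ▸ htriv).mul_star_eq_one
  exact GroupRing.isTrivialUnit_of_mul_star_eq_one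
    (GroupRing.mul_star_eq_one_of_pow_eq_one hk hone)
end

section
/- The free product G ∗ G' of two nontrivial groups G and G' is a cut-group. -/
/-!
Measure an element of a free product by the length of its normal form, and let `u` be a central
unit of its group ring with inverse `v`, which is also central. Pick `g` of maximal length in the
support of `u`, and likewise `h` for `v`. The support of `v` is stable under conjugation, so `h`
may be replaced by any conjugate at least as long, and one of them does not begin in the factor in
which `g` ends: if `h` begins there, then either `h` also ends there and is conjugated by a letter
from another factor, or its first letter is moved to the end. Now the normal form of `g * h` is the
concatenation of the two normal forms, and any other product of elements of the supports is either
shorter or has another normal form. Hence the coefficient of `g * h` in `u * v = 1` is nonzero,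
which forces `g * h = 1`, then `g = 1`, and by maximality `u` is a scalar.
-/

section

open Monoid

section NormalForm

variable {ι : Type*} {M : ι → Type*}

section Monoid

variable [∀ i, Monoid (M i)]

/-- The element of the free product spelled by a list of letters, reduced or not
(`Monoid.CoprodI.Word.prod` evaluates reduced words only). -/
def wordProd (l : List (Σ i, M i)) : CoprodI M :=
  (l.map fun x => CoprodI.of x.2).prod

@[simp]
theorem wordProd_nil : wordProd ([] : List (Σ i, M i)) = 1 := rfl

@[simp]
theorem wordProd_cons (x : Σ i, M i) (l : List (Σ i, M i)) :
    wordProd (x :: l) = CoprodI.of x.2 * wordProd l :=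
  List.prod_cons

@[simp]
theorem wordProd_append (l l' : List (Σ i, M i)) :
    wordProd (l ++ l') = wordProd l * wordProd l' := by
  simp only [wordProd, List.map_append, List.prod_append]

/-- Reduced words: no letter is trivial and adjacent letters come from different factors. This
unbundles the two conditions of `Monoid.CoprodI.Word`, so that they can be asked of any list. -/
def IsReducedWord (l : List (Σ i, M i)) : Prop :=
  (∀ x ∈ l, x.2 ≠ 1) ∧ l.IsChain fun x y => x.1 ≠ y.1

theorem isReducedWord_singleton {x : Σ i, M i} : IsReducedWord [x] ↔ x.2 ≠ 1 := by
  simp [IsReducedWord]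

theorem isReducedWord_append {l l' : List (Σ i, M i)} :
    IsReducedWord (l ++ l') ↔ IsReducedWord l ∧ IsReducedWord l' ∧
      ∀ x ∈ l.getLast?, ∀ y ∈ l'.head?, x.1 ≠ y.1 := by
  simp only [IsReducedWord, List.forall_mem_append, List.isChain_append]
  tauto

open Classical in
/-- The reduced word spelling an element of a free product, as a list of letters; its length is
the length of the element. -/
noncomputable def normalForm (g : CoprodI M) : List (Σ i, M i) :=
  (CoprodI.Word.equiv g).toList

theorem isReducedWord_normalForm (g : CoprodI M) : IsReducedWord (normalForm g) := by
  classical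
  exact ⟨fun _ => (CoprodI.Word.equiv g).ne_one _, (CoprodI.Word.equiv g).chain_ne⟩

@[simp]
theorem wordProd_normalForm (g : CoprodI M) : wordProd (normalForm g) = g := by
  classical
  exact CoprodI.Word.equiv.symm_apply_apply g

theorem IsReducedWord.normalForm_wordProd {l : List (Σ i, M i)} (hl : IsReducedWord l) :
    normalForm (wordProd l) = l := by
  classical
  exact congrArg CoprodI.Word.toList
    (CoprodI.Word.equiv.apply_symm_apply (⟨l, fun _ => hl.1 _, hl.2⟩ : CoprodI.Word M))

theorem normalForm_injective :
    Function.Injective (normalForm : CoprodI M → List (Σ i, M i)) :=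
  Function.LeftInverse.injective wordProd_normalForm

@[simp]
theorem normalForm_eq_nil {g : CoprodI M} : normalForm g = [] ↔ g = 1 := by
  have normalForm_one : normalForm (1 : CoprodI M) = [] :=
    IsReducedWord.normalForm_wordProd (l := []) ⟨by simp, List.isChain_nil⟩
  rw [← normalForm_one, normalForm_injective.eq_iff]

theorem normalForm_mul {g h : CoprodI M}
    (hgh : IsReducedWord (normalForm g ++ normalForm h)) :
    normalForm (g * h) = normalForm g ++ normalForm h := by
  simpa only [wordProd_append, wordProd_normalForm] using hgh.normalForm_wordProd

theorem length_normalForm_of_mul_le {i : ι} (m : M i) (g : CoprodI M) :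
    (normalForm (CoprodI.of m * g)).length ≤ (normalForm g).length + 1 := by
  classical
  have length_rcons (p : CoprodI.Word.Pair M i) :
      p.tail.toList.length ≤ (CoprodI.Word.rcons p).toList.length ∧
        (CoprodI.Word.rcons p).toList.length ≤ p.tail.toList.length + 1 := by
    unfold CoprodI.Word.rcons
    split_ifs <;> simp
  set p := CoprodI.Word.equivPair i (CoprodI.Word.equiv g) with hp
  have word_g : CoprodI.Word.equiv g = CoprodI.Word.rcons p := by
    rw [hp, ← CoprodI.Word.equivPair_symm, Equiv.symm_apply_apply]
  have word_mul : CoprodI.Word.equiv (CoprodI.of m * g) =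
      CoprodI.Word.rcons { p with head := m * p.head } := by
    rw [hp, ← CoprodI.Word.of_smul_def]
    exact mul_smul _ g (CoprodI.Word.empty : CoprodI.Word M)
  calc (normalForm (CoprodI.of m * g)).length
      ≤ p.tail.toList.length + 1 := by
        rw [normalForm, word_mul]
        exact (length_rcons { p with head := m * p.head }).2
    _ ≤ (normalForm g).length + 1 := by
        rw [normalForm, word_g]
        exact Nat.succ_le_succ (length_rcons p).1

theorem length_normalForm_wordProd_le (l : List (Σ i, M i)) :
    (normalForm (wordProd l)).length ≤ l.length := by
  induction l with
  | nil => simp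
  | cons x l ih =>
    rw [wordProd_cons, List.length_cons]
    exact (length_normalForm_of_mul_le x.2 _).trans (Nat.succ_le_succ ih)

theorem length_normalForm_mul_lt {g h : CoprodI M}
    (hgh : ¬IsReducedWord (normalForm g ++ normalForm h)) :
    (normalForm (g * h)).length < (normalForm g).length + (normalForm h).length := by
  have same_factor : ∃ x ∈ (normalForm g).getLast?, ∃ y ∈ (normalForm h).head?, x.1 = y.1 := by
    by_contra! hne
    exact hgh (isReducedWord_append.2
      ⟨isReducedWord_normalForm g, isReducedWord_normalForm h, hne⟩)
  obtain ⟨⟨i, x⟩, hx, ⟨_, y⟩, hy, rfl⟩ := same_factor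
  obtain ⟨l, hl⟩ := List.getLast?_eq_some_iff.1 hx
  obtain ⟨l', hl'⟩ := List.head?_eq_some_iff.1 hy
  have merge : g * h = wordProd (l ++ ⟨i, x * y⟩ :: l') := by
    rw [← wordProd_normalForm g, ← wordProd_normalForm h, hl, hl']
    simp only [wordProd_append, wordProd_cons, wordProd_nil, map_mul, mul_assoc, mul_one]
  calc (normalForm (g * h)).length
      ≤ (l ++ ⟨i, x * y⟩ :: l').length := merge ▸ length_normalForm_wordProd_le _
    _ < (normalForm g).length + (normalForm h).length := by
      simp only [hl, hl', List.length_append, List.length_cons, List.length_nil]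
      omega

theorem eq_and_eq_of_mul_eq_mul_of_length_le {g h p q : CoprodI M}
    (hgh : IsReducedWord (normalForm g ++ normalForm h))
    (hp : (normalForm p).length ≤ (normalForm g).length)
    (hq : (normalForm q).length ≤ (normalForm h).length) (hpq : p * q = g * h) :
    p = g ∧ q = h := by
  have length_eq : (normalForm (p * q)).length = (normalForm g).length + (normalForm h).length := by
    rw [hpq, normalForm_mul hgh, List.length_append]
  have reduced_pq : IsReducedWord (normalForm p ++ normalForm q) := by
    by_contra not_reduced
    have := length_normalForm_mul_lt not_reduced
    omega
  rw [normalForm_mul reduced_pq, List.length_append] at length_eq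
  have append_eq : normalForm p ++ normalForm q = normalForm g ++ normalForm h := by
    rw [← normalForm_mul reduced_pq, hpq, normalForm_mul hgh]
  obtain ⟨left_eq, right_eq⟩ := List.append_inj append_eq (by omega)
  exact ⟨normalForm_injective left_eq, normalForm_injective right_eq⟩

end Monoid

section Group

variable [∀ i, Group (M i)]

theorem normalForm_conj_of {k : ι} {b : M k} (hb : b ≠ 1) {g : CoprodI M} {x y : Σ i, M i}
    (hx : x ∈ (normalForm g).head?) (hy : y ∈ (normalForm g).getLast?)
    (hxk : x.1 ≠ k) (hyk : y.1 ≠ k) :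
    normalForm (CoprodI.of b * g * (CoprodI.of b)⁻¹) =
      ⟨k, b⟩ :: (normalForm g ++ [⟨k, b⁻¹⟩]) := by
  have reduced_append : IsReducedWord (normalForm g ++ [⟨k, b⁻¹⟩]) := by
    refine isReducedWord_append.2
      ⟨isReducedWord_normalForm g, isReducedWord_singleton.2 (inv_ne_one.2 hb), ?_⟩
    simpa [Option.mem_def.1 hy] using hyk
  have reduced : IsReducedWord ([⟨k, b⟩] ++ (normalForm g ++ [⟨k, b⁻¹⟩])) := by
    refine isReducedWord_append.2 ⟨isReducedWord_singleton.2 hb, reduced_append, ?_⟩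
    simpa [Option.mem_def.1 hx] using hxk.symm
  simpa [mul_assoc] using reduced.normalForm_wordProd

theorem normalForm_conj_eq_rotate {g : CoprodI M} {x y : Σ i, M i} {l : List (Σ i, M i)}
    (hg : normalForm g = x :: l) (hy : y ∈ l.getLast?) (hyx : y.1 ≠ x.1) :
    normalForm ((CoprodI.of x.2)⁻¹ * g * CoprodI.of x.2) = l ++ [x] := by
  have reduced_cons : IsReducedWord ([x] ++ l) := by
    simpa only [hg, List.singleton_append] using isReducedWord_normalForm g
  obtain ⟨reduced_x, reduced_l, -⟩ := isReducedWord_append.1 reduced_cons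
  have reduced : IsReducedWord (l ++ [x]) := by
    refine isReducedWord_append.2 ⟨reduced_l, reduced_x, ?_⟩
    simpa [Option.mem_def.1 hy] using hyx
  rw [← reduced.normalForm_wordProd, ← wordProd_normalForm g, hg]
  simp

theorem exists_conj_head_ne [Nontrivial ι] [∀ i, Nontrivial (M i)] (g : CoprodI M) (i : ι) :
    ∃ c : CoprodI M, (normalForm g).length ≤ (normalForm (c * g * c⁻¹)).length ∧
      ∀ x ∈ (normalForm (c * g * c⁻¹)).head?, x.1 ≠ i := by
  by_cases head_ne : ∀ x ∈ (normalForm g).head?, x.1 ≠ i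
  · exact ⟨1, by simpa using head_ne⟩
  push Not at head_ne
  obtain ⟨x, hx, rfl⟩ := head_ne
  obtain ⟨l, hl⟩ := List.head?_eq_some_iff.1 hx
  obtain ⟨y, hy⟩ : ∃ y, y ∈ (normalForm g).getLast? := by simp [hl, List.getLast?_cons]
  by_cases hyx : y.1 = x.1
  · obtain ⟨k, hk⟩ := exists_ne x.1
    obtain ⟨b, hb⟩ := exists_ne (1 : M k)
    refine ⟨CoprodI.of b, ?_⟩
    rw [normalForm_conj_of hb hx hy hk.symm (hyx ▸ hk.symm)]
    simpa [Nat.add_assoc] using hk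
  · have reduced : IsReducedWord ([x] ++ l) := by
      simpa only [hl, List.singleton_append] using isReducedWord_normalForm g
    obtain _ | ⟨z, l⟩ := l
    · simp_all
    refine ⟨(CoprodI.of x.2)⁻¹, ?_⟩
    rw [inv_inv, normalForm_conj_eq_rotate hl (by simpa [hl] using hy) hyx, hl]
    simpa using ((isReducedWord_append.1 reduced).2.2 x (by simp) z (by simp)).symm

theorem exists_conj_isReducedWord_append [Nontrivial ι] [∀ i, Nontrivial (M i)]
    (g h : CoprodI M) :
    ∃ c : CoprodI M, (normalForm h).length ≤ (normalForm (c * h * c⁻¹)).length ∧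
      IsReducedWord (normalForm g ++ normalForm (c * h * c⁻¹)) := by
  have append_reduced {c : CoprodI M} (hc : ∀ x ∈ (normalForm g).getLast?,
      ∀ y ∈ (normalForm (c * h * c⁻¹)).head?, x.1 ≠ y.1) :
      IsReducedWord (normalForm g ++ normalForm (c * h * c⁻¹)) :=
    isReducedWord_append.2 ⟨isReducedWord_normalForm _, isReducedWord_normalForm _, hc⟩
  cases hlast : (normalForm g).getLast? with
  | none => exact ⟨1, by simp, append_reduced (by simp [hlast])⟩
  | some x =>
    obtain ⟨c, length_le, head_ne⟩ := exists_conj_head_ne h x.1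
    refine ⟨c, length_le, append_reduced fun x' hx' y hy => ?_⟩
    obtain rfl : x = x' := Option.some_injective _ (hlast.symm.trans hx')
    exact (head_ne y hy).symm

end Group

end NormalForm

section GroupRing

theorem coeff_conj_of_mem_center {R G : Type*} [Semiring R] [Group G] {u : MonoidAlgebra R G}
    (hu : u ∈ Set.center (MonoidAlgebra R G)) (g h : G) :
    u.coeff (g * h * g⁻¹) = u.coeff h := by
  have commute_single := congrArg (fun z => z.coeff (g * h)) (hu.comm (MonoidAlgebra.single g 1))
  simpa using commute_single

theorem exists_max_length_normalForm {ι R : Type*} {M : ι → Type*} [∀ i, Monoid (M i)]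
    [Semiring R] {u : MonoidAlgebra R (CoprodI M)} (hu : u ≠ 0) :
    ∃ g, u.coeff g ≠ 0 ∧
      ∀ p, u.coeff p ≠ 0 → (normalForm p).length ≤ (normalForm g).length := by
  have support_nonempty : u.coeff.support.Nonempty := by
    simpa [Finsupp.support_nonempty_iff] using hu
  simpa using u.coeff.support.exists_max_image (fun g => (normalForm g).length) support_nonempty

theorem exists_eq_single_one_of_mul_eq_one {ι R : Type*} {G : ι → Type*} [∀ i, Group (G i)]
    [Nontrivial ι] [∀ i, Nontrivial (G i)] [Semiring R] [NoZeroDivisors R] [Nontrivial R]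
    {u v : MonoidAlgebra R (CoprodI G)}
    (hv : v ∈ Set.center (MonoidAlgebra R (CoprodI G))) (huv : u * v = 1) :
    ∃ r : R, u = MonoidAlgebra.single 1 r := by
  classical
  obtain ⟨g, hg, max_g⟩ := exists_max_length_normalForm (left_ne_zero_of_mul_eq_one huv)
  obtain ⟨h, hh, max_h⟩ := exists_max_length_normalForm (right_ne_zero_of_mul_eq_one huv)
  obtain ⟨c, length_le, reduced⟩ := exists_conj_isReducedWord_append g h
  set k := c * h * c⁻¹
  have hk : v.coeff k ≠ 0 := by rwa [coeff_conj_of_mem_center hv]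
  have unique_mul : UniqueMul u.coeff.support v.coeff.support g k := fun p q hp hq hpq =>
    eq_and_eq_of_mul_eq_mul_of_length_le reduced (max_g p (Finsupp.mem_support_iff.1 hp))
      ((max_h q (Finsupp.mem_support_iff.1 hq)).trans length_le) hpq
  have coeff_ne_zero : (u * v).coeff (g * k) ≠ 0 := by
    rw [MonoidAlgebra.coeff_mul_mul_of_uniqueMul unique_mul]
    exact mul_ne_zero hg hk
  have mul_eq_one : g * k = 1 := by
    by_contra hne
    exact coeff_ne_zero (by simp [huv, MonoidAlgebra.one_def, Ne.symm hne])
  have normalForm_g : normalForm g = [] :=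
    (List.append_eq_nil_iff.1 ((normalForm_mul reduced).symm.trans
      (normalForm_eq_nil.2 mul_eq_one))).1
  have support_le : u.coeff.support ⊆ {1} := fun p hp => by
    simpa [normalForm_g] using max_g p (Finsupp.mem_support_iff.1 hp)
  exact ⟨u.coeff 1, MonoidAlgebra.ext (Finsupp.support_subset_singleton.1 support_le)⟩

theorem isCutGroup_coprod_general {ι : Type*} (G : ι → Type*) [∀ i, Group (G i)] [Nontrivial ι]
    [∀ i, Nontrivial (G i)] : IsCutGroup (CoprodI G) := by
  intro u hu
  obtain ⟨n, hn⟩ :=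
    exists_eq_single_one_of_mul_eq_one (Set.units_inv_mem_center hu) u.mul_inv
  have mul_coeff : n * (↑u⁻¹ : MonoidAlgebra ℤ (CoprodI G)).coeff 1 = 1 := by
    rw [← MonoidAlgebra.coeff_single_one_mul, ← hn, u.mul_inv]
    simp [MonoidAlgebra.one_def]
  refine ⟨1, (Int.eq_one_or_neg_one_of_mul_eq_one mul_coeff).imp (fun n_eq => ?_) fun n_eq => ?_⟩
  · simp [hn, n_eq]
  · simp [hn, n_eq]

end GroupRing

section Transfer

theorem IsCutGroup.of_mulEquiv {G H : Type*} [Group G] [Group H] (hG : IsCutGroup G)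
    (e : G ≃* H) : IsCutGroup H := by
  intro u hu
  let E := MonoidAlgebra.mapDomainRingEquiv ℤ e
  have map_single (g : G) : E (MonoidAlgebra.of ℤ G g) = MonoidAlgebra.of ℤ H (e g) := by simp [E]
  obtain ⟨g, hg⟩ := hG (Units.map E.symm.toMonoidHom u)
    ((MulEquivClass.apply_mem_center_iff E.symm).2 hu)
  have map_unit : E (Units.map E.symm.toMonoidHom u : (MonoidAlgebra ℤ G)ˣ) = u :=
    E.apply_symm_apply u
  refine ⟨e g, hg.imp (fun hg => ?_) fun hg => ?_⟩
  · rw [← map_unit, hg, map_single]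
  · rw [← map_unit, hg, map_neg, map_single]

/-- Identifies the free product of a `Bool`-indexed family with the binary free product of its two
members, in the order `false`, `true`. -/
def coprodIBoolEquiv (M : Bool → Type*) [∀ b, Monoid (M b)] :
    CoprodI M ≃* Coprod (M false) (M true) :=
  MonoidHom.toMulEquiv
    (CoprodI.lift (Bool.rec Coprod.inl Coprod.inr))
    (Coprod.lift CoprodI.of CoprodI.of)
    (by ext (_ | _) <;> simp)
    (by ext <;> simp)

universe u v

/-- The pair `G`, `H` as a family indexed by `Bool`, as required by `Monoid.CoprodI`; the members
of a family share a universe, hence the lifts. -/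
def pairFamily (G : Type u) (H : Type v) : Bool → Type (max u v)
  | false => ULift.{v} G
  | true => ULift.{u} H

variable (G : Type u) (H : Type v)

instance [Group G] [Group H] : ∀ b, Group (pairFamily G H b)
  | false => inferInstanceAs (Group (ULift G))
  | true => inferInstanceAs (Group (ULift H))

instance [Nontrivial G] [Nontrivial H] : ∀ b, Nontrivial (pairFamily G H b)
  | false => inferInstanceAs (Nontrivial (ULift G))
  | true => inferInstanceAs (Nontrivial (ULift H))

/-- The binary free product of two groups as an indexed one, where normal forms are available. -/
def coprodIPairEquiv [Group G] [Group H] : CoprodI (pairFamily G H) ≃* Coprod G H :=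
  (coprodIBoolEquiv (pairFamily G H)).trans (MulEquiv.coprodCongr MulEquiv.ulift MulEquiv.ulift)

end Transfer

end

/-- The free product `G ∗ G'` of two nontrivial groups is a cut-group. -/
theorem isCutGroup_coprod (G G' : Type*) [Group G] [Group G'] [Nontrivial G] [Nontrivial G'] :
    IsCutGroup (Monoid.Coprod G G') :=
  (isCutGroup_coprod_general (pairFamily G G')).of_mulEquiv (coprodIPairEquiv G G')
end
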